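/- Lemma (H_φ ∈ ℍ⁰, Lemma 3.1): There exists a constant C>0 such that for every family of complex numbers (φ̂_{m,n})_{m∈ℤ, n≥1} with ∑_{m∈ℤ, n≥1} |φ̂_{m,n}|² (m²+n²)² < ∞, one has ∑_{l,l' ∈ Λ} |ℱ_lℱ_{l'}(H_φ)|² ≤ C · ∑_{m∈ℤ, n≥1} |φ̂_{m,n}|² (m²+n²)². In particular, if φ belongs to the Sobolev space ℍ² of order 2 (weighted ℓ² condition on its Fourier coefficients with weight (m²+n²)²), then the kernel H_φ has square-summable double Fourier coefficients, i.e. H_φ ∈ ℍ⁰(D×D). -/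

import Mathlib

noncomputable section

/-- The index set `Λ = ℤ × (ℕ∖{0})`, realized as pairs of integers with positive second entry. -/
def Lam : Set (ℤ × ℤ) := {l | 1 ≤ l.2}

/-- The double Fourier coefficient `ℱ_l ℱ_{l'} (H_φ)` of the kernel `H_φ` representing the
quasi-geostrophic nonlinearity, in terms of the (odd-in-`k` extended) Fourier coefficients
`c = φ̂` of the test function `φ`: for `l = (j,k)`, `l' = (j',k')`,
`ℱ_lℱ_{l'}(H_φ) = (1/(4i))·[(j'k − jk') c_{j+j',k+k'} − (j'k + jk') c_{j+j',k−k'}]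
  ·(1/(j²+k²) − 1/(j'²+k'²))`. -/
def Hcoeff (c : ℤ × ℤ → ℂ) (l l' : ℤ × ℤ) : ℂ :=
  (1 / (4 * Complex.I)) *
    (((l'.1 * l.2 - l.1 * l'.2 : ℤ) : ℂ) * c (l.1 + l'.1, l.2 + l'.2)
      - ((l'.1 * l.2 + l.1 * l'.2 : ℤ) : ℂ) * c (l.1 + l'.1, l.2 - l'.2)) *
    (1 / ((l.1 : ℂ)^2 + (l.2 : ℂ)^2) - 1 / ((l'.1 : ℂ)^2 + (l'.2 : ℂ)^2))

/-!
Reflecting `l' = (j', k')` to `l'* = (j', -k')` writes `ℱ_lℱ_{l'}(H_φ)` as `i/4` times the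
difference of the values at `l'` and `l'*` of a single term `K(l, l') c_{l+l'}`, where
`K(l, l') = (l × l') (|l|⁻² - |l'|⁻²)`. Since `l × l' = l × (l + l') = (l + l') × l'` and
`|l'|² - |l|² = (l' - l) · (l' + l)`, each factor of `K` gains a factor `|l+l'|`, and
`K(l, l')² ≤ 4 |l+l'|⁴ |l|⁻² |l'|⁻² ≤ 2 |l+l'|⁴ (|l|⁻⁴ + |l'|⁻⁴)`.
Summing over `ℤ² × ℤ²`, the substitution `m = l + l'` separates the variables, leaving the
convergent lattice sum `∑ |l|⁻⁴` times the squared `ℍ²`-norm.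
-/

section PlaneGeometry

variable {R : Type*} [CommRing R]

/-- The squared Euclidean length `|x|²` of a point of the plane `R × R`, which is not the square
of Mathlib's (sup) norm on products. -/
def sqNorm (x : R × R) : R := x.1 ^ 2 + x.2 ^ 2

/-- The scalar cross product `x × y` of two points of the plane. -/
def cross (x y : R × R) : R := x.1 * y.2 - x.2 * y.1

theorem cross_add_self_right (x y : R × R) : cross x (x + y) = cross x y := by
  simp only [cross, Prod.fst_add, Prod.snd_add]; ring

theorem cross_add_self_left (x y : R × R) : cross (x + y) y = cross x y := by
  simp only [cross, Prod.fst_add, Prod.snd_add]; ring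

theorem sqNorm_sub_add_sqNorm_add (x y : R × R) :
    sqNorm (y - x) + sqNorm (x + y) = 2 * (sqNorm x + sqNorm y) := by
  simp only [sqNorm, Prod.fst_add, Prod.snd_add, Prod.fst_sub, Prod.snd_sub]; ring

variable [LinearOrder R] [IsStrictOrderedRing R]

theorem sqNorm_nonneg (x : R × R) : 0 ≤ sqNorm x :=
  add_nonneg (sq_nonneg _) (sq_nonneg _)

theorem sqNorm_eq_zero {x : R × R} : sqNorm x = 0 ↔ x = 0 := by
  rw [sqNorm, add_eq_zero_iff_of_nonneg (sq_nonneg _) (sq_nonneg _), sq_eq_zero_iff,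
    sq_eq_zero_iff, Prod.ext_iff, Prod.fst_zero, Prod.snd_zero]

theorem sq_cross_le (x y : R × R) : cross x y ^ 2 ≤ sqNorm x * sqNorm y := by
  have lagrange : cross x y ^ 2 + (x.1 * y.1 + x.2 * y.2) ^ 2 = sqNorm x * sqNorm y := by
    simp only [cross, sqNorm]; ring
  linarith [sq_nonneg (x.1 * y.1 + x.2 * y.2)]

theorem sq_cross_le_min_mul_sqNorm_add (x y : R × R) :
    cross x y ^ 2 ≤ min (sqNorm x) (sqNorm y) * sqNorm (x + y) := by
  rw [min_mul_of_nonneg _ _ (sqNorm_nonneg _), le_min_iff]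
  constructor
  · simpa only [cross_add_self_right] using sq_cross_le x (x + y)
  · simpa only [cross_add_self_left, mul_comm] using sq_cross_le (x + y) y

theorem sq_sqNorm_sub_sqNorm_le (x y : R × R) :
    (sqNorm y - sqNorm x) ^ 2 ≤ sqNorm (y - x) * sqNorm (x + y) := by
  have lagrange : (sqNorm y - sqNorm x) ^ 2 + cross (y - x) (x + y) ^ 2
      = sqNorm (y - x) * sqNorm (x + y) := by
    simp only [cross, sqNorm, Prod.fst_add, Prod.snd_add, Prod.fst_sub, Prod.snd_sub]; ring
  linarith [sq_nonneg (cross (y - x) (x + y))]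

theorem sq_sqNorm_sub_sqNorm_le_max_mul_sqNorm_add (x y : R × R) :
    (sqNorm y - sqNorm x) ^ 2 ≤ 4 * max (sqNorm x) (sqNorm y) * sqNorm (x + y) := by
  have sqNorm_sub_le : sqNorm (y - x) ≤ 4 * max (sqNorm x) (sqNorm y) := by
    linarith [sqNorm_sub_add_sqNorm_add x y, sqNorm_nonneg (x + y),
      le_max_left (sqNorm x) (sqNorm y), le_max_right (sqNorm x) (sqNorm y)]
  exact (sq_sqNorm_sub_sqNorm_le x y).trans
    (mul_le_mul_of_nonneg_right sqNorm_sub_le (sqNorm_nonneg _))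

theorem sq_cross_mul_sq_sqNorm_sub_sqNorm_le (x y : R × R) :
    cross x y ^ 2 * (sqNorm y - sqNorm x) ^ 2
      ≤ 4 * sqNorm (x + y) ^ 2 * (sqNorm x * sqNorm y) :=
  calc cross x y ^ 2 * (sqNorm y - sqNorm x) ^ 2
      ≤ (min (sqNorm x) (sqNorm y) * sqNorm (x + y))
          * (4 * max (sqNorm x) (sqNorm y) * sqNorm (x + y)) :=
        mul_le_mul (sq_cross_le_min_mul_sqNorm_add x y)
          (sq_sqNorm_sub_sqNorm_le_max_mul_sqNorm_add x y) (sq_nonneg _)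
          (mul_nonneg (le_min (sqNorm_nonneg x) (sqNorm_nonneg y)) (sqNorm_nonneg _))
    _ = 4 * sqNorm (x + y) ^ 2 * (min (sqNorm x) (sqNorm y) * max (sqNorm x) (sqNorm y)) := by ring
    _ = 4 * sqNorm (x + y) ^ 2 * (sqNorm x * sqNorm y) := by rw [min_mul_max]

end PlaneGeometry

section TriadCoeff

variable {𝕜 : Type*} [Field 𝕜]

/-- The coefficient `K(x, y) = (x × y) (|x|⁻² - |y|⁻²)` with which the modes `x` and `y` drive the
mode `x + y`. Where `x = 0` or `y = 0` it vanishes, because the cross product does. -/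
def triadCoeff (x y : 𝕜 × 𝕜) : 𝕜 := cross x y * ((sqNorm x)⁻¹ - (sqNorm y)⁻¹)

variable [LinearOrder 𝕜] [IsStrictOrderedRing 𝕜]

theorem sq_triadCoeff_le_mul (x y : 𝕜 × 𝕜) :
    triadCoeff x y ^ 2 ≤ 4 * sqNorm (x + y) ^ 2 * ((sqNorm x)⁻¹ * (sqNorm y)⁻¹) := by
  rcases eq_or_ne x 0 with rfl | hx
  · simp [triadCoeff, cross, sqNorm]
  rcases eq_or_ne y 0 with rfl | hy
  · simp [triadCoeff, cross, sqNorm]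
  have hx' : sqNorm x ≠ 0 := sqNorm_eq_zero.not.mpr hx
  have hy' : sqNorm y ≠ 0 := sqNorm_eq_zero.not.mpr hy
  calc triadCoeff x y ^ 2
      = cross x y ^ 2 * (sqNorm y - sqNorm x) ^ 2 / (sqNorm x * sqNorm y) ^ 2 := by
        rw [triadCoeff, inv_sub_inv hx' hy', mul_pow, div_pow, mul_div_assoc]
    _ ≤ 4 * sqNorm (x + y) ^ 2 * (sqNorm x * sqNorm y) / (sqNorm x * sqNorm y) ^ 2 := by
        gcongr ?_ / _
        exact sq_cross_mul_sq_sqNorm_sub_sqNorm_le x y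
    _ = 4 * sqNorm (x + y) ^ 2 * ((sqNorm x)⁻¹ * (sqNorm y)⁻¹) := by
        field_simp

theorem sq_triadCoeff_le_add (x y : 𝕜 × 𝕜) :
    triadCoeff x y ^ 2 ≤ 2 * sqNorm (x + y) ^ 2 * ((sqNorm x)⁻¹ ^ 2 + (sqNorm y)⁻¹ ^ 2) :=
  calc triadCoeff x y ^ 2
      ≤ 4 * sqNorm (x + y) ^ 2 * ((sqNorm x)⁻¹ * (sqNorm y)⁻¹) := sq_triadCoeff_le_mul x y
    _ = 2 * sqNorm (x + y) ^ 2 * (2 * (sqNorm x)⁻¹ * (sqNorm y)⁻¹) := by ring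
    _ ≤ 2 * sqNorm (x + y) ^ 2 * ((sqNorm x)⁻¹ ^ 2 + (sqNorm y)⁻¹ ^ 2) := by
        gcongr
        exact two_mul_le_add_sq _ _

end TriadCoeff

section SumsOverProducts

variable {G : Type*} [AddGroup G] {f g : G → ℝ} {a b : ℝ}

theorem hasSum_fst_mul_comp_add (hf : HasSum f a) (hg : HasSum g b) (hf₀ : 0 ≤ f) (hg₀ : 0 ≤ g) :
    HasSum (fun p : G × G => f p.1 * g (p.1 + p.2)) (a * b) :=
  (Equiv.prodShear (Equiv.refl G) Equiv.addLeft).hasSum_iff.mpr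
    (hf.mul hg (hf.summable.mul_of_nonneg hg.summable hf₀ hg₀))

theorem hasSum_snd_mul_comp_add (hf : HasSum f a) (hg : HasSum g b) (hf₀ : 0 ≤ f) (hg₀ : 0 ≤ g) :
    HasSum (fun p : G × G => f p.2 * g (p.1 + p.2)) (a * b) :=
  ((Equiv.prodComm G G).trans (Equiv.prodShear (Equiv.refl G) Equiv.addRight)).hasSum_iff.mpr
    (hf.mul hg (hf.summable.mul_of_nonneg hg.summable hf₀ hg₀))

end SumsOverProducts

section Lattice

/-- The inclusion of the lattice of Fourier modes `ℤ²` into the real plane. -/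
def toPlane : ℤ × ℤ →+ ℝ × ℝ := (Int.castAddHom ℝ).prodMap (Int.castAddHom ℝ)

theorem toPlane_apply (l : ℤ × ℤ) : toPlane l = ((l.1 : ℝ), (l.2 : ℝ)) := rfl

theorem sq_norm_le_sqNorm_toPlane (l : ℤ × ℤ) : ‖l‖ ^ 2 ≤ sqNorm (toPlane l) := by
  have sq_norm_fst : ‖l.1‖ ^ 2 = (l.1 : ℝ) ^ 2 := by rw [Int.norm_eq_abs, sq_abs]
  have sq_norm_snd : ‖l.2‖ ^ 2 = (l.2 : ℝ) ^ 2 := by rw [Int.norm_eq_abs, sq_abs]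
  simp only [sqNorm, toPlane_apply]
  rcases max_choice ‖l.1‖ ‖l.2‖ with h | h <;> rw [Prod.norm_def, h] <;>
    linarith [sq_nonneg (l.1 : ℝ), sq_nonneg (l.2 : ℝ)]

theorem summable_norm_rpow_neg_int_prod {r : ℝ} (hr : 2 < r) :
    Summable fun l : ℤ × ℤ => ‖l‖ ^ (-r) := by
  have norm_finTwo (x : Fin 2 → ℤ) : ‖finTwoArrowEquiv ℤ x‖ = ‖x‖ := by
    simp [Prod.norm_def, Pi.norm_def, Fin.univ_succ]
  rw [← (finTwoArrowEquiv ℤ).summable_iff]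
  simpa only [Function.comp_def, norm_finTwo] using
    EisensteinSeries.summable_one_div_norm_rpow hr

theorem summable_sqNorm_toPlane_rpow_neg {s : ℝ} (hs : 1 < s) :
    Summable fun l : ℤ × ℤ => sqNorm (toPlane l) ^ (-s) := by
  refine (summable_norm_rpow_neg_int_prod (r := 2 * s) (by linarith)).of_nonneg_of_le
    (fun l => Real.rpow_nonneg (sqNorm_nonneg _) _) fun l => ?_
  rcases eq_or_ne l 0 with rfl | hl
  · have hs₀ : -s ≠ 0 := by linarith
    simp [sqNorm, Real.zero_rpow hs₀, Real.rpow_nonneg]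
  · calc sqNorm (toPlane l) ^ (-s) ≤ (‖l‖ ^ 2) ^ (-s) :=
          Real.rpow_le_rpow_of_nonpos (pow_pos (norm_pos_iff.mpr hl) 2)
            (sq_norm_le_sqNorm_toPlane l) (by linarith)
      _ = ‖l‖ ^ (-(2 * s)) := by
          rw [← Real.rpow_natCast_mul (norm_nonneg l), Nat.cast_ofNat, mul_neg]

theorem summable_inv_sqNorm_toPlane_sq : Summable fun l => (sqNorm (toPlane l))⁻¹ ^ 2 :=
  (summable_sqNorm_toPlane_rpow_neg one_lt_two).congr fun l => by
    rw [Real.rpow_neg (sqNorm_nonneg _), Real.rpow_two, inv_pow]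

theorem tsum_inv_sqNorm_toPlane_sq_pos : 0 < ∑' l, (sqNorm (toPlane l))⁻¹ ^ 2 :=
  summable_inv_sqNorm_toPlane_sq.tsum_pos (fun _ => sq_nonneg _) (1, 0)
    (by norm_num [sqNorm, toPlane_apply])

/-- The reflection `(j, k) ↦ (j, -k)` of the lattice, which exchanges `Lam` with its mirror
image. -/
def reflect : ℤ × ℤ ≃ ℤ × ℤ := Equiv.prodCongr (Equiv.refl ℤ) (Equiv.neg ℤ)

theorem reflect_apply (l : ℤ × ℤ) : reflect l = (l.1, -l.2) := rfl

theorem sqNorm_toPlane_reflect (l : ℤ × ℤ) :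
    sqNorm (toPlane (reflect l)) = sqNorm (toPlane l) := by
  simp only [sqNorm, toPlane_apply, reflect_apply, Int.cast_neg, neg_sq]

theorem indicator_Lam_add_indicator_Lam_reflect {M : Type*} [AddZeroClass M] {f : ℤ × ℤ → M}
    (even : ∀ l, f (reflect l) = f l) (zero_on_axis : ∀ m, f (m, 0) = 0) (l : ℤ × ℤ) :
    Lam.indicator f l + Lam.indicator f (reflect l) = f l := by
  obtain ⟨m, n⟩ := l
  have mem_iff : (m, n) ∈ Lam ↔ 1 ≤ n := Iff.rfl
  have reflect_mem_iff : reflect (m, n) ∈ Lam ↔ 1 ≤ -n := Iff.rfl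
  classical
  simp only [Set.indicator_apply, even, mem_iff, reflect_mem_iff]
  rcases lt_trichotomy n 0 with neg | rfl | pos
  · rw [if_neg (by omega), if_pos (by omega), zero_add]
  · rw [if_neg (by omega), if_neg (by omega), zero_add, zero_on_axis]
  · rw [if_pos (by omega), if_neg (by omega), add_zero]

theorem hasSum_of_hasSum_Lam_of_even {M : Type*} [AddCommMonoid M] [TopologicalSpace M]
    [ContinuousAdd M] {f : ℤ × ℤ → M} {s : M} (even : ∀ l, f (reflect l) = f l)
    (zero_on_axis : ∀ m, f (m, 0) = 0) (hf : HasSum (fun l : Lam => f l) s) :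
    HasSum f (s + s) := by
  have upper : HasSum (Lam.indicator f) s := hasSum_subtype_iff_indicator.mp hf
  have lower : HasSum (Lam.indicator f ∘ reflect) s := reflect.hasSum_iff.mpr upper
  simpa only [Function.comp_apply, indicator_Lam_add_indicator_Lam_reflect even zero_on_axis]
    using upper.add lower

end Lattice

section FourierCoefficients

variable {c : ℤ × ℤ → ℂ}

/-- The term `|c_m|² |m|⁴` of the squared `ℍ²`-norm of `c`. -/
def sobolevTerm (c : ℤ × ℤ → ℂ) (m : ℤ × ℤ) : ℝ := ‖c m‖ ^ 2 * sqNorm (toPlane m) ^ 2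

theorem sobolevTerm_nonneg (c : ℤ × ℤ → ℂ) : 0 ≤ sobolevTerm c :=
  fun _ => mul_nonneg (sq_nonneg _) (sq_nonneg _)

theorem hasSum_sobolevTerm_of_odd (odd : ∀ m n : ℤ, c (m, -n) = -c (m, n))
    (hc : Summable fun m : Lam => sobolevTerm c m) :
    HasSum (sobolevTerm c) (2 * ∑' m : Lam, sobolevTerm c m) := by
  rw [two_mul]
  refine hasSum_of_hasSum_Lam_of_even (fun l => ?_) (fun m => ?_) hc.hasSum
  · rw [sobolevTerm, sobolevTerm, sqNorm_toPlane_reflect, reflect_apply, odd, norm_neg]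
  · have c_axis : c (m, 0) = 0 := self_eq_neg.mp (by simpa only [neg_zero] using odd m 0)
    rw [sobolevTerm, c_axis, norm_zero, zero_pow two_ne_zero, zero_mul]

/-- The term `K(l, l') c_{l+l'}` through which the modes `l` and `l'` of the lattice contribute to
the kernel `H_φ`. -/
def triadTerm (c : ℤ × ℤ → ℂ) (l l' : ℤ × ℤ) : ℂ :=
  triadCoeff (toPlane l) (toPlane l') * c (l + l')

theorem sq_norm_triadTerm_le (c : ℤ × ℤ → ℂ) (l l' : ℤ × ℤ) :
    ‖triadTerm c l l'‖ ^ 2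
      ≤ 2 * ((sqNorm (toPlane l))⁻¹ ^ 2 * sobolevTerm c (l + l')
        + (sqNorm (toPlane l'))⁻¹ ^ 2 * sobolevTerm c (l + l')) := by
  rw [triadTerm, norm_mul, Complex.norm_real, mul_pow, Real.norm_eq_abs, sq_abs, sobolevTerm,
    map_add]
  linarith [mul_le_mul_of_nonneg_right (sq_triadCoeff_le_add (toPlane l) (toPlane l'))
    (sq_nonneg ‖c (l + l')‖)]

theorem hasSum_sq_norm_triadTerm_majorant (hc : Summable (sobolevTerm c)) :
    HasSum (fun p : (ℤ × ℤ) × (ℤ × ℤ) =>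
        2 * ((sqNorm (toPlane p.1))⁻¹ ^ 2 * sobolevTerm c (p.1 + p.2)
          + (sqNorm (toPlane p.2))⁻¹ ^ 2 * sobolevTerm c (p.1 + p.2)))
      (4 * ((∑' l, (sqNorm (toPlane l))⁻¹ ^ 2) * ∑' m, sobolevTerm c m)) := by
  have weight := summable_inv_sqNorm_toPlane_sq.hasSum
  have weight_nonneg : 0 ≤ fun l => (sqNorm (toPlane l))⁻¹ ^ 2 := fun _ => sq_nonneg _
  have four_mul_eq (t : ℝ) : 4 * t = 2 * (t + t) := by ring
  rw [four_mul_eq]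
  exact ((hasSum_fst_mul_comp_add weight hc.hasSum weight_nonneg (sobolevTerm_nonneg c)).add
    (hasSum_snd_mul_comp_add weight hc.hasSum weight_nonneg (sobolevTerm_nonneg c))).mul_left 2

theorem summable_sq_norm_triadTerm (hc : Summable (sobolevTerm c)) :
    Summable fun p : (ℤ × ℤ) × (ℤ × ℤ) => ‖triadTerm c p.1 p.2‖ ^ 2 :=
  (hasSum_sq_norm_triadTerm_majorant hc).summable.of_nonneg_of_le (fun _ => sq_nonneg _)
    fun p => sq_norm_triadTerm_le c p.1 p.2

theorem tsum_sq_norm_triadTerm_le (hc : Summable (sobolevTerm c)) :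
    ∑' p : (ℤ × ℤ) × (ℤ × ℤ), ‖triadTerm c p.1 p.2‖ ^ 2
      ≤ 4 * ((∑' l, (sqNorm (toPlane l))⁻¹ ^ 2) * ∑' m, sobolevTerm c m) := by
  have majorant := hasSum_sq_norm_triadTerm_majorant hc
  rw [← majorant.tsum_eq]
  exact (summable_sq_norm_triadTerm hc).tsum_le_tsum (fun p => sq_norm_triadTerm_le c p.1 p.2)
    majorant.summable

theorem Hcoeff_eq_triadTerm_sub (c : ℤ × ℤ → ℂ) (l l' : ℤ × ℤ) :
    Hcoeff c l l' = Complex.I / 4 * (triadTerm c l l' - triadTerm c l (reflect l')) := by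
  have inv_four_I : 1 / (4 * Complex.I) = -(Complex.I / 4) := by
    rw [one_div, mul_inv, Complex.inv_I]; ring
  simp only [Hcoeff, triadTerm, triadCoeff, sqNorm_toPlane_reflect, inv_four_I]
  simp only [cross, sqNorm, toPlane_apply, reflect_apply, Prod.add_def, ← sub_eq_add_neg]
  push_cast
  ring

theorem sq_norm_Hcoeff_le (c : ℤ × ℤ → ℂ) (l l' : ℤ × ℤ) :
    ‖Hcoeff c l l'‖ ^ 2
      ≤ 1 / 8 * (‖triadTerm c l l'‖ ^ 2 + ‖triadTerm c l (reflect l')‖ ^ 2) := by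
  have sq_norm_sub_le : ‖triadTerm c l l' - triadTerm c l (reflect l')‖ ^ 2
      ≤ 2 * (‖triadTerm c l l'‖ ^ 2 + ‖triadTerm c l (reflect l')‖ ^ 2) :=
    (pow_le_pow_left₀ (norm_nonneg _) (norm_sub_le _ _) 2).trans add_sq_le
  have norm_I_div_four : ‖Complex.I / 4‖ = 1 / 4 := by simp
  rw [Hcoeff_eq_triadTerm_sub, norm_mul, mul_pow, norm_I_div_four]
  linarith

theorem summable_and_tsum_sq_norm_Hcoeff_le (hc : Summable (sobolevTerm c)) :
    Summable (fun p : Lam × Lam => ‖Hcoeff c p.1.1 p.2.1‖ ^ 2) ∧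
      ∑' p : Lam × Lam, ‖Hcoeff c p.1.1 p.2.1‖ ^ 2
        ≤ (∑' l, (sqNorm (toPlane l))⁻¹ ^ 2) * ∑' m, sobolevTerm c m := by
  let F (p : (ℤ × ℤ) × (ℤ × ℤ)) : ℝ := ‖triadTerm c p.1 p.2‖ ^ 2
  let direct : Lam × Lam → (ℤ × ℤ) × (ℤ × ℤ) := Prod.map (↑) (↑)
  let reflected : Lam × Lam → (ℤ × ℤ) × (ℤ × ℤ) := Prod.map (↑) (reflect ∘ (↑))
  have direct_inj : direct.Injective := Subtype.val_injective.prodMap Subtype.val_injective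
  have reflected_inj : reflected.Injective :=
    Subtype.val_injective.prodMap (reflect.injective.comp Subtype.val_injective)
  have hF : Summable F := summable_sq_norm_triadTerm hc
  have hF₀ (p) : 0 ≤ F p := sq_nonneg _
  have sum_direct := hF.comp_injective direct_inj
  have sum_reflected := hF.comp_injective reflected_inj
  have majorant := (sum_direct.hasSum.add sum_reflected.hasSum).mul_left (1 / 8)
  have bound (p : Lam × Lam) : ‖Hcoeff c p.1.1 p.2.1‖ ^ 2
      ≤ 1 / 8 * ((F ∘ direct) p + (F ∘ reflected) p) := sq_norm_Hcoeff_le c p.1 p.2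
  have summable_H : Summable fun p : Lam × Lam => ‖Hcoeff c p.1.1 p.2.1‖ ^ 2 :=
    majorant.summable.of_nonneg_of_le (fun _ => sq_nonneg _) bound
  refine ⟨summable_H, ?_⟩
  have tsum_direct : tsum (F ∘ direct) ≤ tsum F := tsum_comp_le_tsum_of_inj hF hF₀ direct_inj
  have tsum_reflected : tsum (F ∘ reflected) ≤ tsum F :=
    tsum_comp_le_tsum_of_inj hF hF₀ reflected_inj
  linarith [hasSum_le bound summable_H.hasSum majorant, tsum_sq_norm_triadTerm_le hc]

end FourierCoefficients

/-- **Lemma 3.1 (`H_φ ∈ ℍ⁰`).** There is a constant `C > 0` such that for every family of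
Fourier coefficients `c` (extended oddly in the second index, so `c (m, -n) = -c (m, n)`,
which in particular forces `c (m, 0) = 0`) with `∑_{m∈ℤ,n≥1} |c_{m,n}|²(m²+n²)² < ∞`, the
double Fourier coefficients of `H_φ` are square-summable, with
`∑_{l,l'∈Λ} |ℱ_lℱ_{l'}(H_φ)|² ≤ C ∑_{m∈ℤ,n≥1} |c_{m,n}|²(m²+n²)²`. -/
theorem Hphi_mem_H0 :
    ∃ C : ℝ, 0 < C ∧ ∀ c : ℤ × ℤ → ℂ,
      (∀ m n : ℤ, c (m, -n) = -c (m, n)) →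
      Summable (fun m : Lam => ‖c m.1‖^2 * ((m.1.1 : ℝ)^2 + (m.1.2 : ℝ)^2)^2) →
      Summable (fun p : Lam × Lam => ‖Hcoeff c p.1.1 p.2.1‖^2) ∧
      ∑' p : Lam × Lam, ‖Hcoeff c p.1.1 p.2.1‖^2
        ≤ C * ∑' m : Lam, ‖c m.1‖^2 * ((m.1.1 : ℝ)^2 + (m.1.2 : ℝ)^2)^2 := by
  refine ⟨2 * ∑' l, (sqNorm (toPlane l))⁻¹ ^ 2, mul_pos two_pos tsum_inv_sqNorm_toPlane_sq_pos,
    fun c odd hc => ?_⟩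
  have hc' := hasSum_sobolevTerm_of_odd odd hc
  obtain ⟨summable_H, tsum_H_le⟩ := summable_and_tsum_sq_norm_Hcoeff_le hc'.summable
  refine ⟨summable_H, ?_⟩
  calc ∑' p : Lam × Lam, ‖Hcoeff c p.1.1 p.2.1‖ ^ 2
      ≤ (∑' l, (sqNorm (toPlane l))⁻¹ ^ 2) * ∑' m, sobolevTerm c m := tsum_H_le
    _ = 2 * (∑' l, (sqNorm (toPlane l))⁻¹ ^ 2) * ∑' m : Lam, sobolevTerm c m := by
        rw [hc'.tsum_eq]; ring
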